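/- arXiv:2404.12696 — 3 statements merged into one kernel-verified Lean document; each statement's English description precedes it below -/
import Mathlib

section
/- Let X ~ N_k(μ, Σ), α ∈ ℝ^k ∖ {0}, and Y := ⟨α, X⟩ with Var Y > 0. If two quantile split pairs (a,b) and (a′,b′) with 0 ≤ a < b ≤ 1 and 0 ≤ a′ < b′ ≤ 1 satisfy Var[Y | Y ∈ A(a,b)] = Var[Y | Y ∈ A(a′,b′)], then Cov[X | Y ∈ A(a,b)] = Cov[X | Y ∈ A(a′,b′)]. -/
open MeasureTheory ProbabilityTheory Filter Set

noncomputable section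

/-- Covariance of two real random variables under the measure `m`. -/
def covar {Ω : Type*} [MeasurableSpace Ω] (m : Measure Ω) (f g : Ω → ℝ) : ℝ :=
  ∫ ω, (f ω - ∫ x, f x ∂m) * (g ω - ∫ x, g x ∂m) ∂m

/-- Generalized inverse of the CDF of a measure on `ℝ`, `F⁻¹(p) = inf {y | F(y) ≥ p}`,
with values in `EReal` (`⊥` at `p = 0` and `⊤` at `p = 1` for fully supported laws). -/
def invCDF (μ : Measure ℝ) (p : ℝ) : EReal :=
  sInf ((fun x : ℝ => (x : EReal)) '' {x : ℝ | p ≤ cdf μ x})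

/-- Quantile conditioning set `A(a,b) = {y : F⁻¹(a) < y < F⁻¹(b)}`. -/
def qSet (μ : Measure ℝ) (a b : ℝ) : Set ℝ :=
  {y : ℝ | invCDF μ a < (y : EReal) ∧ (y : EReal) < invCDF μ b}

/-- The CDF of a probability measure without atoms is continuous. -/
theorem continuous_cdf_of_noAtoms (ν : Measure ℝ) [IsProbabilityMeasure ν]
    (hν : ∀ x, ν {x} = 0) : Continuous (cdf ν) := by
  refine continuous_iff_continuousAt.2 fun x => ?_
  rw [(monotone_cdf ν).continuousAt_iff_leftLim_eq_rightLim, StieltjesFunction.rightLim_eq]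
  refine le_antisymm ((monotone_cdf ν).leftLim_le le_rfl) ?_
  have h := (cdf ν).measure_singleton x
  rw [measure_cdf, hν, eq_comm, ENNReal.ofReal_eq_zero] at h
  linarith

theorem isOpen_qSet (ν : Measure ℝ) (a b : ℝ) : IsOpen (qSet ν a b) :=
  isOpen_Ioo.preimage continuous_coe_real_ereal

theorem qSet_nonempty (ν : Measure ℝ) (hν : Continuous (cdf ν)) {a b : ℝ}
    (ha : 0 ≤ a) (hab : a < b) (hb : b ≤ 1) : (qSet ν a b).Nonempty := by
  obtain ⟨c, hac, hcb⟩ := exists_between hab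
  obtain ⟨y, rfl⟩ : c ∈ range (cdf ν) :=
    mem_range_of_exists_le_of_exists_ge hν
      (((tendsto_cdf_atBot ν).eventually_le_const (ha.trans_lt hac)).exists)
      (((tendsto_cdf_atTop ν).eventually_const_le (hcb.trans_le hb)).exists)
  refine ⟨y, ?_, ?_⟩
  · obtain ⟨x, hx, hxy⟩ :=
      ((hν.continuousAt.eventually_const_lt hac).filter_mono nhdsWithin_le_nhds |>.and
        (self_mem_nhdsWithin : Iio y ∈ nhdsWithin y (Iio y))).exists
    exact (sInf_le ⟨x, hx.le, rfl⟩ : invCDF ν a ≤ (x : EReal)).trans_lt (EReal.coe_lt_coe_iff.2 hxy)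
  · obtain ⟨x, hx, hxy⟩ :=
      ((hν.continuousAt.eventually_lt_const hcb).filter_mono nhdsWithin_le_nhds |>.and
        (self_mem_nhdsWithin : Ioi y ∈ nhdsWithin y (Ioi y))).exists
    refine (EReal.coe_lt_coe_iff.2 hxy).trans_le (le_sInf ?_)
    rintro _ ⟨z, hz, rfl⟩
    refine EReal.coe_le_coe_iff.2 (le_of_lt ?_)
    exact (monotone_cdf ν).reflect_lt (hx.trans_le hz)

theorem gaussianReal_qSet_ne_zero (m : ℝ) {v : NNReal} (hv : v ≠ 0) {a b : ℝ}
    (ha : 0 ≤ a) (hab : a < b) (hb : b ≤ 1) :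
    gaussianReal m v (qSet (gaussianReal m v) a b) ≠ 0 := by
  have hcont := continuous_cdf_of_noAtoms (gaussianReal m v) fun x =>
    gaussianReal_absolutelyContinuous m hv (measure_singleton x)
  intro h
  exact (isOpen_qSet _ a b).measure_ne_zero volume (qSet_nonempty _ hcont ha hab hb)
    (gaussianReal_absolutelyContinuous' m hv h)

theorem memLp_cond {Ω : Type*} [MeasurableSpace Ω] {P : Measure Ω} {f : Ω → ℝ} {p : ENNReal}
    (hf : MemLp f p P) {s : Set Ω} (hs : P s ≠ 0) : MemLp f p (P[|s]) :=
  (hf.restrict s).smul_measure (ENNReal.inv_ne_top.2 hs)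

section Conditioning

variable {Ω E F : Type*} [MeasurableSpace Ω] [MeasurableSpace E] [MeasurableSpace F]
  {P : Measure Ω} [IsProbabilityMeasure P] {R : Ω → E} {Y : Ω → F} {A : Set F}

/-- Conditioning on an event of `Y` does not change the law of a variable independent of `Y`. -/
theorem map_cond_preimage_of_indepFun (h : IndepFun R Y P) (hR : Measurable R)
    (hY : Measurable Y) (hA : MeasurableSet A) (hPA : P (Y ⁻¹' A) ≠ 0) :
    (P[|Y ⁻¹' A]).map R = P.map R := by
  ext s hs
  rw [Measure.map_apply hR hs, Measure.map_apply hR hs, cond_apply (hY hA), inter_comm,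
    h.measure_inter_preimage_eq_mul _ _ hs hA, mul_comm, mul_assoc,
    ENNReal.mul_inv_cancel hPA (measure_ne_top _ _), mul_one]

/-- Conditioning on an event of `Y` preserves independence from `Y`. -/
theorem indepFun_cond_preimage (h : IndepFun R Y P) (hR : Measurable R)
    (hY : Measurable Y) (hA : MeasurableSet A) (hPA : P (Y ⁻¹' A) ≠ 0) :
    IndepFun R Y (P[|Y ⁻¹' A]) := by
  rw [indepFun_iff_measure_inter_preimage_eq_mul]
  intro s t hs ht
  rw [← Measure.map_apply hR hs, map_cond_preimage_of_indepFun h hR hY hA hPA,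
    Measure.map_apply hR hs, cond_apply (hY hA), cond_apply (hY hA), inter_left_comm,
    ← preimage_inter, h.measure_inter_preimage_eq_mul _ _ hs (hA.inter ht)]
  ring

end Conditioning

/-- If `R` is independent of `Y`, the covariances of the variables `β i * Y + R i` given an event
of `Y` depend on that event only through the conditional variance of `Y`. -/
theorem covariance_cond_of_indepFun {Ω ι : Type*} [MeasurableSpace Ω] {P : Measure Ω}
    [IsProbabilityMeasure P] {R : Ω → ι → ℝ} {Y : Ω → ℝ} {A : Set ℝ}
    (h : IndepFun R Y P) (hR : Measurable R) (hY : Measurable Y) (hA : MeasurableSet A)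
    (hPA : P (Y ⁻¹' A) ≠ 0) (hR2 : ∀ i, MemLp (fun ω => R ω i) 2 P) (hY2 : MemLp Y 2 P)
    (β : ι → ℝ) (i j : ι) :
    cov[fun ω => β i * Y ω + R ω i, fun ω => β j * Y ω + R ω j; P[|Y ⁻¹' A]]
      = β i * β j * variance Y (P[|Y ⁻¹' A])
        + cov[fun ω => R ω i, fun ω => R ω j; P] := by
  have := cond_isProbabilityMeasure hPA
  have hRQ := fun l => memLp_cond (hR2 l) hPA
  have hYQ := memLp_cond hY2 hPA
  have hβY := fun l => hYQ.const_mul (β l)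
  have hind : ∀ l, cov[fun ω => R ω l, Y; P[|Y ⁻¹' A]] = 0 := fun l =>
    ((indepFun_cond_preimage h hR hY hA hPA).comp (measurable_pi_apply l)
      measurable_id).covariance_eq_zero (hRQ l) hYQ
  have hRR : cov[fun ω => R ω i, fun ω => R ω j; P[|Y ⁻¹' A]]
      = cov[fun ω => R ω i, fun ω => R ω j; P] := by
    have hmap : ∀ m : Measure Ω, cov[fun ω => R ω i, fun ω => R ω j; m]
        = cov[fun x : ι → ℝ => x i, fun x => x j; m.map R] := fun m =>
      (covariance_map (X := fun x : ι → ℝ => x i) (Y := fun x => x j)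
        (measurable_pi_apply i).aestronglyMeasurable
        (measurable_pi_apply j).aestronglyMeasurable hR.aemeasurable).symm
    rw [hmap, hmap, map_cond_preimage_of_indepFun h hR hY hA hPA]
  change cov[(fun ω => β i * Y ω) + fun ω => R ω i, (fun ω => β j * Y ω) + fun ω => R ω j;
    P[|Y ⁻¹' A]] = _
  rw [covariance_add_left (hβY i) (hRQ i) ((hβY j).add (hRQ j)),
    covariance_add_right (hβY i) (hβY j) (hRQ j), covariance_add_right (hRQ i) (hβY j) (hRQ j),
    covariance_const_mul_left, covariance_const_mul_left, covariance_const_mul_right,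
    covariance_const_mul_right, covariance_self hYQ.aemeasurable, hind,
    covariance_comm Y, hind, hRR]
  ring

/-- A random vector all of whose linear combinations are Gaussian has a Gaussian law. -/
theorem hasGaussianLaw_of_forall_sum {Ω ι : Type*} [Fintype ι] [MeasurableSpace Ω]
    {P : Measure Ω} {X : Ω → ι → ℝ} (hX : Measurable X)
    (h : ∀ c : ι → ℝ, IsGaussian (P.map fun ω => ∑ i, c i * X ω i)) : HasGaussianLaw X P where
  isGaussian_map := by
    classical
    refine isGaussian_of_isGaussian_map fun L => ?_
    rw [Measure.map_map L.continuous.measurable hX]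
    convert h fun i => L (Pi.single i 1) using 2
    ext ω
    conv_lhs => rw [Function.comp_apply, pi_eq_sum_univ' (X ω)]
    simp only [map_sum, map_smul, smul_eq_mul, mul_comm]

/-- The residuals of the regression of a Gaussian vector on one of its linear functionals are
independent of that functional. -/
theorem indepFun_residual_of_hasGaussianLaw {Ω ι : Type*} [Fintype ι] [MeasurableSpace Ω]
    {P : Measure Ω} {X : Ω → ι → ℝ} (hX : HasGaussianLaw X P) (L : (ι → ℝ) →L[ℝ] ℝ)
    (hL : variance (fun ω => L (X ω)) P ≠ 0) :
    IndepFun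
      (fun ω i => X ω i
        - cov[fun ω => X ω i, fun ω => L (X ω); P] / variance (fun ω => L (X ω)) P * L (X ω))
      (fun ω => L (X ω)) P := by
  have := hX.isProbabilityMeasure
  set β : ι → ℝ := fun i =>
    cov[fun ω => X ω i, fun ω => L (X ω); P] / variance (fun ω => L (X ω)) P
  have hX2 : ∀ i, MemLp (fun ω => X ω i) 2 P := fun i =>
    (hX.map_fun (ContinuousLinearMap.proj (R := ℝ) (φ := fun _ : ι => ℝ) i)).memLp_two
  have hL2 : MemLp (fun ω => L (X ω)) 2 P := (hX.map_fun L).memLp_two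
  have hjoint : HasGaussianLaw (fun ω => (fun i => X ω i - β i * L (X ω),
      fun _ : Unit => L (X ω))) P :=
    hX.map_fun ((ContinuousLinearMap.pi fun i =>
      ContinuousLinearMap.proj (R := ℝ) (φ := fun _ : ι => ℝ) i - β i • L).prod
        (ContinuousLinearMap.pi fun _ : Unit => L))
  have hind := HasGaussianLaw.indepFun_of_covariance_eval
    (X := fun i ω => X ω i - β i * L (X ω)) (Y := fun (_ : Unit) ω => L (X ω)) hjoint
    fun i _ => by
      rw [covariance_fun_sub_left (hX2 i) (hL2.const_mul _) hL2, covariance_const_mul_left,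
        covariance_self hL2.aemeasurable, div_mul_cancel₀ _ hL, sub_self]
  exact hind.comp measurable_id (measurable_pi_apply ())

/-- For a Gaussian vector `X ~ N_k(μ, Σ)` with non-degenerate benchmark
`Y = ⟨α, X⟩`: if two quantile split pairs give the same conditional variance of `Y`, then
they give the same conditional covariance matrix of `X`. -/
theorem conditional_covariance_eq_of_conditional_variance_eq
    {Ω : Type*} [MeasureSpace Ω] [IsProbabilityMeasure (ℙ : Measure Ω)]
    (k : ℕ) (X : Ω → Fin k → ℝ) (hXmeas : Measurable X)
    (μ : Fin k → ℝ) (S : Matrix (Fin k) (Fin k) ℝ)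
    (hGauss : ∀ c : Fin k → ℝ,
      (ℙ : Measure Ω).map (fun ω => ∑ i, c i * X ω i)
        = gaussianReal (∑ i, c i * μ i)
            (Real.toNNReal (∑ i, ∑ j, c i * S i j * c j)))
    (α : Fin k → ℝ) (hα : α ≠ 0)
    (Y : Ω → ℝ) (hY : Y = fun ω => ∑ i, α i * X ω i)
    (hVarYpos : 0 < variance Y ℙ)
    (a b a' b' : ℝ) (ha : 0 ≤ a) (hab : a < b) (hb : b ≤ 1)
    (ha' : 0 ≤ a') (hab' : a' < b') (hb' : b' ≤ 1)
    (A A' : Set ℝ) (hA : A = qSet ((ℙ : Measure Ω).map Y) a b)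
    (hA' : A' = qSet ((ℙ : Measure Ω).map Y) a' b')
    (hvar : variance Y (ℙ[|Y ⁻¹' A]) = variance Y (ℙ[|Y ⁻¹' A'])) :
    ∀ i j, covar (ℙ[|Y ⁻¹' A]) (fun ω => X ω i) (fun ω => X ω j)
      = covar (ℙ[|Y ⁻¹' A']) (fun ω => X ω i) (fun ω => X ω j) := by
  have hXG : HasGaussianLaw X (ℙ : Measure Ω) :=
    hasGaussianLaw_of_forall_sum hXmeas fun c => by rw [hGauss c]; infer_instance
  let L : (Fin k → ℝ) →L[ℝ] ℝ := ∑ i, α i • ContinuousLinearMap.proj i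
  have hYL : Y = fun ω => L (X ω) := by
    simp [hY, L]
  have hYG : HasGaussianLaw Y (ℙ : Measure Ω) := hYL ▸ hXG.map_fun L
  have hYmeas : Measurable Y := hYL ▸ L.continuous.measurable.comp hXmeas
  have hpos : ∀ {p q : ℝ}, 0 ≤ p → p < q → q ≤ 1 →
      (ℙ : Measure Ω) (Y ⁻¹' qSet ((ℙ : Measure Ω).map Y) p q) ≠ 0 := fun hp hpq hq => by
    rw [← Measure.map_apply hYmeas (isOpen_qSet _ _ _).measurableSet, hYG.map_eq_gaussianReal]
    exact gaussianReal_qSet_ne_zero _ (Real.toNNReal_pos.2 hVarYpos).ne' hp hpq hq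
  set β : Fin k → ℝ := fun i => cov[fun ω => X ω i, Y; ℙ] / variance Y ℙ
  have hXi : ∀ i, Measurable fun ω => X ω i := fun i => (measurable_pi_apply i).comp hXmeas
  have hRmeas : Measurable fun ω i => X ω i - β i * Y ω :=
    measurable_pi_lambda _ fun i => (hXi i).sub (hYmeas.const_mul _)
  have hR2 : ∀ i, MemLp (fun ω => X ω i - β i * Y ω) 2 ℙ := fun i =>
    (hXG.map_fun (ContinuousLinearMap.proj (R := ℝ) (φ := fun _ : Fin k => ℝ) i)).memLp_two.sub
      (hYG.memLp_two.const_mul _)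
  have hind : IndepFun (fun ω i => X ω i - β i * Y ω) Y ℙ := by
    have hYω : ∀ ω, L (X ω) = Y ω := fun ω => (congrFun hYL ω).symm
    have h := indepFun_residual_of_hasGaussianLaw hXG L
    simp only [hYω] at h
    exact h hVarYpos.ne'
  intro i j
  have key : ∀ {p q : ℝ}, 0 ≤ p → p < q → q ≤ 1 → _ := fun {p q} hp hpq hq =>
    covariance_cond_of_indepFun hind hRmeas hYmeas
      (isOpen_qSet ((ℙ : Measure Ω).map Y) p q).measurableSet (hpos hp hpq hq) hR2
      hYG.memLp_two β i j
  simp only [add_sub_cancel] at key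
  subst hA hA'
  change cov[fun ω => X ω i, fun ω => X ω j; _] = cov[fun ω => X ω i, fun ω => X ω j; _]
  rw [key ha hab hb, key ha' hab' hb', hvar]
end
end

section
/- There exists a unique q̃ ∈ (0, 1/2) such that, for a standard normal random variable V, Var[V | V < Φ⁻¹(q̃)] = Var[V | Φ⁻¹(q̃) < V < Φ⁻¹(1−q̃)]; for this q̃ one moreover has Var[V | V < Φ⁻¹(q̃)] = Var[V | Φ⁻¹(q̃) < V < Φ⁻¹(1−q̃)] = Var[V | V > Φ⁻¹(1−q̃)], and 0.198 < q̃ < 0.199. -/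
open MeasureTheory ProbabilityTheory Filter Set

noncomputable section

/-- The standard normal CDF `Φ`. -/
def stdNormalCDF : ℝ → ℝ := fun x => cdf (gaussianReal 0 1) x

/-- The standard normal quantile function `Φ⁻¹(p) = inf {x | Φ(x) ≥ p}`. -/
def stdNormalQuantile (p : ℝ) : ℝ := sInf {x : ℝ | p ≤ stdNormalCDF x}

/-- The standard normal density. -/
def stdNormalPDF (x : ℝ) : ℝ := (√(2 * Real.pi))⁻¹ * Real.exp (-x ^ 2 / 2)

/-- The standard normal mass `∫₀ᵃ φ`, negative for `a < 0`. -/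
def centralMass (a : ℝ) : ℝ := ∫ t in (0 : ℝ)..a, stdNormalPDF t

/-- For `0 < a`, this vanishes exactly when the variances of a standard normal variable conditioned
on the tail `(a, ∞)` and on the centre `(-a, a)` agree. -/
def varianceGap (a : ℝ) : ℝ := centralMass a - a / (2 * (a + 2 * stdNormalPDF a))

lemma gaussianPDFReal_zero_one : gaussianPDFReal 0 1 = stdNormalPDF := by
  ext x
  simp [gaussianPDFReal, stdNormalPDF]

lemma stdNormalPDF_pos (x : ℝ) : 0 < stdNormalPDF x := by
  unfold stdNormalPDF
  positivity

lemma stdNormalPDF_neg (x : ℝ) : stdNormalPDF (-x) = stdNormalPDF x := by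
  simp [stdNormalPDF]

lemma hasDerivAt_stdNormalPDF (x : ℝ) :
    HasDerivAt stdNormalPDF (-(x * stdNormalPDF x)) x := by
  have h : HasDerivAt (fun x : ℝ => -x ^ 2 / 2) (-x) x := by
    have := ((hasDerivAt_pow 2 x).neg).div_const 2
    convert! this using 1
    norm_num
    ring
  have := h.exp.const_mul (√(2 * Real.pi))⁻¹
  unfold stdNormalPDF
  convert! this using 1
  ring

lemma continuous_stdNormalPDF : Continuous stdNormalPDF := by
  unfold stdNormalPDF
  fun_prop

lemma integrable_stdNormalPDF : Integrable stdNormalPDF := by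
  rw [← gaussianPDFReal_zero_one]
  exact integrable_gaussianPDFReal 0 1

lemma tendsto_mul_stdNormalPDF : Tendsto (fun x => x * stdNormalPDF x) atTop (nhds 0) := by
  have h := ((rpow_mul_exp_neg_mul_sq_isLittleO_exp_neg (b := 1 / 2) (by norm_num) 1).trans_tendsto
    ((Real.tendsto_exp_atBot).comp (tendsto_id.const_mul_atTop_of_neg
      (by norm_num : -(1 / 2 : ℝ) < 0)))).const_mul (√(2 * Real.pi))⁻¹
  rw [mul_zero] at h
  refine h.congr fun x => ?_
  simp only [stdNormalPDF, Real.rpow_one]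
  ring_nf

lemma tendsto_stdNormalPDF : Tendsto stdNormalPDF atTop (nhds 0) := by
  refine squeeze_zero' (Eventually.of_forall fun x => (stdNormalPDF_pos x).le) ?_
    tendsto_mul_stdNormalPDF
  filter_upwards [eventually_ge_atTop 1] with x hx
  exact le_mul_of_one_le_left (stdNormalPDF_pos x).le hx

lemma integral_Ioi_zero_stdNormalPDF : ∫ t in Ioi (0 : ℝ), stdNormalPDF t = 1 / 2 := by
  have h := integral_gaussian_Ioi (1 / 2)
  have h2 : ∫ t in Ioi (0 : ℝ), stdNormalPDF t
      = (√(2 * Real.pi))⁻¹ * ∫ t in Ioi (0 : ℝ), Real.exp (-(1 / 2) * t ^ 2) := by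
    rw [← integral_const_mul]
    refine integral_congr_ae (Eventually.of_forall fun x => ?_)
    simp only [stdNormalPDF]
    ring_nf
  have h3 : √(2 * Real.pi) ≠ 0 := by positivity
  rw [h2, h, show Real.pi / (1 / 2) = 2 * Real.pi by ring]
  field_simp

lemma integral_Ioi_stdNormalPDF (a : ℝ) :
    ∫ t in Ioi a, stdNormalPDF t = 1 / 2 - centralMass a := by
  have h := intervalIntegral.integral_interval_add_Ioi (a := 0) (b := a)
    integrable_stdNormalPDF.integrableOn integrable_stdNormalPDF.integrableOn
  rw [integral_Ioi_zero_stdNormalPDF] at h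
  unfold centralMass
  linarith

lemma hasDerivAt_centralMass (a : ℝ) : HasDerivAt centralMass (stdNormalPDF a) a :=
  intervalIntegral.integral_hasDerivAt_right (continuous_stdNormalPDF.intervalIntegrable _ _)
    (continuous_stdNormalPDF.stronglyMeasurableAtFilter _ _) continuous_stdNormalPDF.continuousAt

lemma continuous_centralMass : Continuous centralMass :=
  continuous_iff_continuousAt.2 fun a => (hasDerivAt_centralMass a).continuousAt

lemma strictMono_centralMass : StrictMono centralMass :=
  strictMono_of_hasDerivAt_pos hasDerivAt_centralMass stdNormalPDF_pos

lemma centralMass_zero : centralMass 0 = 0 := by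
  simp [centralMass]

lemma centralMass_neg (a : ℝ) : centralMass (-a) = -centralMass a := by
  have h := intervalIntegral.integral_comp_neg (a := 0) (b := a) stdNormalPDF
  simp only [stdNormalPDF_neg, neg_zero] at h
  rw [centralMass, centralMass, h, intervalIntegral.integral_symm]

lemma tendsto_centralMass : Tendsto centralMass atTop (nhds (1 / 2)) := by
  rw [← integral_Ioi_zero_stdNormalPDF]
  exact intervalIntegral_tendsto_integral_Ioi 0 integrable_stdNormalPDF.integrableOn tendsto_id

lemma centralMass_lt_half (a : ℝ) : centralMass a < 1 / 2 :=
  (strictMono_centralMass (lt_add_one a)).trans_le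
    (strictMono_centralMass.monotone.ge_of_tendsto tendsto_centralMass _)

/-- Sampford's upper bound for the Mills ratio of the normal distribution. -/
lemma half_sub_centralMass_le {a : ℝ} (ha : 0 < a) :
    1 / 2 - centralMass a ≤ 4 * stdNormalPDF a / (3 * a + √(a ^ 2 + 8)) := by
  set g : ℝ → ℝ := fun x => (1 / 2 - centralMass x) - 4 * stdNormalPDF x / (3 * x + √(x ^ 2 + 8))
    with hg
  have hpos : ∀ x : ℝ, 0 < x → 0 < √(x ^ 2 + 8) := fun x _ => by positivity
  have hd : ∀ x : ℝ, 0 < x → HasDerivAt g ((0 - stdNormalPDF x)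
      - ((4 * -(x * stdNormalPDF x)) * (3 * x + √(x ^ 2 + 8))
        - 4 * stdNormalPDF x * (3 + 2 * x / (2 * √(x ^ 2 + 8)))) / (3 * x + √(x ^ 2 + 8)) ^ 2) x := by
    intro x hx
    have h1 : HasDerivAt (fun x : ℝ => √(x ^ 2 + 8)) (2 * x / (2 * √(x ^ 2 + 8))) x := by
      have := ((hasDerivAt_pow 2 x).add_const 8).sqrt (by positivity)
      simpa using this
    have h2 : HasDerivAt (fun x : ℝ => 3 * x + √(x ^ 2 + 8)) (3 + 2 * x / (2 * √(x ^ 2 + 8))) x := by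
      simpa using! ((hasDerivAt_id x).const_mul 3).add h1
    exact ((hasDerivAt_const x _).sub (hasDerivAt_centralMass x)).sub
      (((hasDerivAt_stdNormalPDF x).const_mul 4).div h2 (by have := hpos x hx; positivity))
  have hmono : MonotoneOn g (Ioi 0) := by
    refine monotoneOn_of_hasDerivWithinAt_nonneg (convex_Ioi 0)
      (fun x hx => (hd x hx).continuousAt.continuousWithinAt)
      (fun x hx => (hd x (interior_subset hx)).hasDerivWithinAt) fun x hx => ?_
    have hx : 0 < x := interior_subset hx
    have hs := hpos x hx
    have hs2 : √(x ^ 2 + 8) ^ 2 = x ^ 2 + 8 := Real.sq_sqrt (by positivity)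
    have hφ := stdNormalPDF_pos x
    set s := √(x ^ 2 + 8)
    have key : x * (x ^ 2 + 6) ≤ (x ^ 2 + 2) * s := by
      refine le_of_sq_le_sq ?_ (by positivity)
      rw [mul_pow _ s, hs2]
      nlinarith
    have heq : (0 - stdNormalPDF x) - ((4 * -(x * stdNormalPDF x)) * (3 * x + s)
        - 4 * stdNormalPDF x * (3 + 2 * x / (2 * s))) / (3 * x + s) ^ 2
        = 2 * stdNormalPDF x * ((x ^ 2 + 2) * s - x * (x ^ 2 + 6)) / (s * (3 * x + s) ^ 2) := by
      have : 3 * x + s ≠ 0 := by positivity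
      field_simp
      linear_combination -(stdNormalPDF x * (s + 2 * x)) * hs2
    rw [heq]
    have : 0 ≤ (x ^ 2 + 2) * s - x * (x ^ 2 + 6) := by linarith
    positivity
  have hlim : Tendsto g atTop (nhds 0) := by
    have h1 : Tendsto (fun x => 1 / 2 - centralMass x) atTop (nhds 0) := by
      have := tendsto_centralMass.const_sub (1 / 2 : ℝ)
      rwa [sub_self] at this
    have h2 : Tendsto (fun x => 4 * stdNormalPDF x / (3 * x + √(x ^ 2 + 8))) atTop (nhds 0) := by
      have h3 : Tendsto (fun x => 4 * stdNormalPDF x) atTop (nhds 0) := by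
        simpa using tendsto_stdNormalPDF.const_mul 4
      refine h3.div_atTop (tendsto_atTop_mono' _ ?_ tendsto_id)
      filter_upwards [eventually_gt_atTop 0] with x hx
      have := hpos x hx
      simp only [id]
      linarith
    simpa only [sub_zero] using! h1.sub h2
  have : g a ≤ 0 := by
    refine ge_of_tendsto hlim ?_
    filter_upwards [eventually_ge_atTop a] with b hb
    exact hmono ha (ha.trans_le hb) hb
  simp only [hg] at this
  linarith

lemma inv_sqrt_two_pi_bounds :
    0.3989422 < (√(2 * Real.pi))⁻¹ ∧ (√(2 * Real.pi))⁻¹ < 0.3989424 := by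
  have h1 := Real.pi_gt_d6
  have h2 := Real.pi_lt_d6
  have hs : 0 < √(2 * Real.pi) := by positivity
  constructor
  · rw [lt_inv_comm₀ (by norm_num) hs, Real.sqrt_lt' (by norm_num)]
    norm_num at h2 ⊢
    linarith
  · rw [inv_lt_comm₀ hs (by norm_num)]
    apply Real.lt_sqrt_of_sq_lt
    norm_num at h1 ⊢
    linarith

lemma varianceGap_neg_iff {a : ℝ} (ha : 0 < a) :
    varianceGap a < 0 ↔ 2 * centralMass a * (a + 2 * stdNormalPDF a) < a := by
  have := stdNormalPDF_pos a
  rw [varianceGap, sub_neg, lt_div_iff₀ (by positivity)]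
  ring_nf

lemma varianceGap_pos_iff {a : ℝ} (ha : 0 < a) :
    0 < varianceGap a ↔ a < 2 * centralMass a * (a + 2 * stdNormalPDF a) := by
  have := stdNormalPDF_pos a
  rw [varianceGap, sub_pos, div_lt_iff₀ (by positivity)]
  ring_nf

lemma stdNormalPDF_le (x : ℝ) : stdNormalPDF x ≤ (√(2 * Real.pi))⁻¹ :=
  mul_le_of_le_one_right (by positivity) (Real.exp_le_one_iff.2 (by nlinarith [sq_nonneg x]))

lemma varianceGap_neg_of_le {a : ℝ} (ha : 0 < a) (ha' : a ≤ 0.45) : varianceGap a < 0 := by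
  rw [varianceGap_neg_iff ha]
  obtain ⟨-, hc⟩ := inv_sqrt_two_pi_bounds
  have hA : centralMass a ≤ 0.3989424 * a := by
    have h := intervalIntegral.norm_integral_le_of_norm_le_const (a := 0) (b := a)
      (f := stdNormalPDF) (C := 0.3989424) fun x _ => by
        rw [Real.norm_of_nonneg (stdNormalPDF_pos x).le]
        exact (stdNormalPDF_le x).trans hc.le
    rw [sub_zero, abs_of_pos ha] at h
    exact (le_abs_self _).trans h
  have hφ := (stdNormalPDF_le a).trans hc.le
  have hφ0 := stdNormalPDF_pos a
  calc 2 * centralMass a * (a + 2 * stdNormalPDF a)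
      ≤ 2 * (0.3989424 * a) * (0.45 + 2 * 0.3989424) := by gcongr
    _ < a := by norm_num at ha' ⊢; linarith

lemma varianceGap_pos_of_one_le {a : ℝ} (ha : 1 ≤ a) : 0 < varianceGap a := by
  have ha0 : 0 < a := one_pos.trans_le ha
  rw [varianceGap_pos_iff ha0]
  have hφ0 := stdNormalPDF_pos a
  have hs0 : 0 < √(a ^ 2 + 8) := by positivity
  have hs2 : √(a ^ 2 + 8) ^ 2 = a ^ 2 + 8 := Real.sq_sqrt (by positivity)
  have hq := half_sub_centralMass_le ha0
  have hE : Real.exp (-a ^ 2 / 2) ≤ (1 + a ^ 2 / 2 + (a ^ 2 / 2) ^ 2 / 2)⁻¹ := by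
    rw [neg_div, Real.exp_neg]
    exact inv_anti₀ (by positivity) (Real.quadratic_le_exp_of_nonneg (by positivity))
  have hφ : stdNormalPDF a * (1 + a ^ 2 / 2 + (a ^ 2 / 2) ^ 2 / 2) ≤ 0.3989424 := by
    calc stdNormalPDF a * (1 + a ^ 2 / 2 + (a ^ 2 / 2) ^ 2 / 2)
        ≤ (0.3989424 * (1 + a ^ 2 / 2 + (a ^ 2 / 2) ^ 2 / 2)⁻¹)
          * (1 + a ^ 2 / 2 + (a ^ 2 / 2) ^ 2 / 2) := by
          unfold stdNormalPDF
          gcongr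
          exact inv_sqrt_two_pi_bounds.2.le
      _ = 0.3989424 := by field_simp
  have hφ1 : stdNormalPDF a * a ≤ 0.25 := by
    norm_num at hφ ⊢
    nlinarith [mul_pos hφ0 ha0, mul_nonneg hφ0.le (sub_nonneg.2 ha),
      mul_nonneg hφ0.le (sq_nonneg (a - 1)), mul_nonneg hφ0.le (sq_nonneg (a ^ 2 - 1))]
  have hφ2 : stdNormalPDF a ≤ 0.246 := by
    norm_num at hφ ⊢
    nlinarith [mul_nonneg hφ0.le (sub_nonneg.2 ha),
      mul_nonneg hφ0.le (sq_nonneg (a - 1)), mul_nonneg hφ0.le (sq_nonneg (a ^ 2 - 1))]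
  have hs : a + 8 * stdNormalPDF a < √(a ^ 2 + 8) := by
    apply Real.lt_sqrt_of_sq_lt
    norm_num at hφ1 hφ2
    nlinarith
  have hq' : (1 / 2 - centralMass a) * (a + 2 * stdNormalPDF a) < stdNormalPDF a := by
    rw [le_div_iff₀ (by positivity)] at hq
    have : 0 < 1 / 2 - centralMass a := sub_pos.2 (centralMass_lt_half a)
    nlinarith
  linarith

lemma abs_exp_neg_sq_sub_le {t : ℝ} (ht0 : 0 ≤ t) (ht : t ≤ 0.85) :
    |Real.exp (-t ^ 2 / 2) - (1 - t ^ 2 / 2 + t ^ 4 / 8 - t ^ 6 / 48 + t ^ 8 / 384 - t ^ 10 / 3840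
      + t ^ 12 / 46080 - t ^ 14 / 645120)| ≤ 1 / 100000000 := by
  have hx : |(-t ^ 2 / 2)| ≤ 0.36125 := by
    rw [neg_div, abs_neg, abs_of_nonneg (by positivity)]
    norm_num at ht ⊢
    nlinarith
  have h := Real.exp_bound (x := -t ^ 2 / 2) (hx.trans (by norm_num)) (n := 8) (by norm_num)
  have h2 : |(-t ^ 2 / 2)| ^ 8 * ((Nat.succ 8 : ℕ) / ((Nat.factorial 8 : ℕ) * (8 : ℕ)) : ℝ)
      ≤ 1 / 100000000 := by
    calc _ ≤ (0.36125 : ℝ) ^ 8 * ((Nat.succ 8 : ℕ) / ((Nat.factorial 8 : ℕ) * (8 : ℕ)) : ℝ) := by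
          gcongr
      _ ≤ _ := by norm_num [Nat.factorial]
  refine (le_of_eq ?_).trans (h.trans h2)
  congr 2
  simp only [Finset.sum_range_succ, Finset.sum_range_zero, Nat.factorial]
  norm_num
  ring

lemma abs_integral_exp_neg_sq_sub_le {a : ℝ} (ha0 : 0 ≤ a) (ha : a ≤ 0.85) :
    |(∫ t in (0 : ℝ)..a, Real.exp (-t ^ 2 / 2)) - (a - a ^ 3 / 6 + a ^ 5 / 40 - a ^ 7 / 336
      + a ^ 9 / 3456 - a ^ 11 / 42240 + a ^ 13 / 599040 - a ^ 15 / 9676800)| ≤ 1 / 100000000 := by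
  have h := intervalIntegral.norm_integral_le_of_norm_le_const (a := 0) (b := a)
    (f := fun t : ℝ => Real.exp (-t ^ 2 / 2) - (1 - t ^ 2 / 2 + t ^ 4 / 8 - t ^ 6 / 48 + t ^ 8 / 384
      - t ^ 10 / 3840 + t ^ 12 / 46080 - t ^ 14 / 645120)) (C := 1 / 100000000) fun x hx => by
      rw [uIoc_of_le ha0] at hx
      exact abs_exp_neg_sq_sub_le hx.1.le (hx.2.trans ha)
  have hP : ∫ t in (0 : ℝ)..a, (1 - t ^ 2 / 2 + t ^ 4 / 8 - t ^ 6 / 48 + t ^ 8 / 384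
      - t ^ 10 / 3840 + t ^ 12 / 46080 - t ^ 14 / 645120) = a - a ^ 3 / 6 + a ^ 5 / 40 - a ^ 7 / 336
      + a ^ 9 / 3456 - a ^ 11 / 42240 + a ^ 13 / 599040 - a ^ 15 / 9676800 := by
    repeat rw [intervalIntegral.integral_sub (Continuous.intervalIntegrable (by fun_prop) _ _)
      (Continuous.intervalIntegrable (by fun_prop) _ _)] <;>
    repeat rw [intervalIntegral.integral_add (Continuous.intervalIntegrable (by fun_prop) _ _)
      (Continuous.intervalIntegrable (by fun_prop) _ _)]
    simp only [intervalIntegral.integral_div, integral_pow, integral_one]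
    norm_num
    ring
  rw [intervalIntegral.integral_sub (Continuous.intervalIntegrable (by fun_prop) _ _)
    (Continuous.intervalIntegrable (by fun_prop) _ _), hP, sub_zero, abs_of_nonneg ha0] at h
  refine h.trans ?_
  norm_num at ha ⊢
  linarith

lemma centralMass_eq (a : ℝ) :
    centralMass a = (√(2 * Real.pi))⁻¹ * ∫ t in (0 : ℝ)..a, Real.exp (-t ^ 2 / 2) := by
  simp only [centralMass, stdNormalPDF, intervalIntegral.integral_const_mul]

lemma varianceGap_lower : varianceGap 0.846 < 0 ∧ 0.301 < centralMass 0.846 := by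
  have hE := abs_le.1 (abs_exp_neg_sq_sub_le (t := 0.846) (by norm_num) (by norm_num))
  have hI := abs_le.1 (abs_integral_exp_neg_sq_sub_le (a := 0.846) (by norm_num) (by norm_num))
  obtain ⟨hc1, hc2⟩ := inv_sqrt_two_pi_bounds
  have hφ := stdNormalPDF_pos 0.846
  rw [varianceGap_neg_iff (by norm_num)]
  have hA1 : centralMass 0.846 < 0.301225 := by
    rw [centralMass_eq]
    have hI2 : ∫ t in (0 : ℝ)..0.846, Real.exp (-t ^ 2 / 2) ≤ 0.755058 := by
      norm_num at hI ⊢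
      linarith
    refine (mul_le_mul hc2.le hI2 ?_ (by norm_num)).trans_lt (by norm_num)
    norm_num at hI ⊢
    linarith
  have hA2 : 0.301222 < centralMass 0.846 := by
    rw [centralMass_eq]
    have hI1 : 0.755055 ≤ ∫ t in (0 : ℝ)..0.846, Real.exp (-t ^ 2 / 2) := by
      norm_num at hI ⊢
      linarith
    exact lt_of_lt_of_le (by norm_num) (mul_le_mul hc1.le hI1 (by norm_num) (by positivity))
  have hφ2 : stdNormalPDF 0.846 < 0.278932 := by
    have hE2 : Real.exp (-0.846 ^ 2 / 2) ≤ 0.699177 := by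
      norm_num at hE ⊢
      linarith
    exact (mul_le_mul hc2.le hE2 (by positivity) (by norm_num)).trans_lt (by norm_num)
  refine ⟨?_, lt_trans (by norm_num) hA2⟩
  calc 2 * centralMass 0.846 * (0.846 + 2 * stdNormalPDF 0.846)
      ≤ 2 * 0.301225 * (0.846 + 2 * 0.278932) := by gcongr
    _ < 0.846 := by norm_num

lemma varianceGap_upper : 0 < varianceGap 0.8487 ∧ centralMass 0.8487 < 0.302 := by
  have hE := abs_le.1 (abs_exp_neg_sq_sub_le (t := 0.8487) (by norm_num) (by norm_num))
  have hI := abs_le.1 (abs_integral_exp_neg_sq_sub_le (a := 0.8487) (by norm_num) (by norm_num))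
  obtain ⟨hc1, hc2⟩ := inv_sqrt_two_pi_bounds
  rw [varianceGap_pos_iff (by norm_num)]
  have hA1 : centralMass 0.8487 < 0.301978 := by
    rw [centralMass_eq]
    have hI2 : ∫ t in (0 : ℝ)..0.8487, Real.exp (-t ^ 2 / 2) ≤ 0.756943 := by
      norm_num at hI ⊢
      linarith
    refine (mul_le_mul hc2.le hI2 ?_ (by norm_num)).trans_lt (by norm_num)
    norm_num at hI ⊢
    linarith
  have hA2 : 0.3019755 < centralMass 0.8487 := by
    rw [centralMass_eq]
    have hI1 : 0.7569407 ≤ ∫ t in (0 : ℝ)..0.8487, Real.exp (-t ^ 2 / 2) := by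
      norm_num at hI ⊢
      linarith
    exact lt_of_lt_of_le (by norm_num) (mul_le_mul hc1.le hI1 (by norm_num) (by positivity))
  have hφ1 : 0.278291 < stdNormalPDF 0.8487 := by
    have hE1 : 0.697574 ≤ Real.exp (-0.8487 ^ 2 / 2) := by
      norm_num at hE ⊢
      linarith
    exact lt_of_lt_of_le (by norm_num) (mul_le_mul hc1.le hE1 (by norm_num) (by positivity))
  refine ⟨?_, lt_trans hA1 (by norm_num)⟩
  calc (0.8487 : ℝ) < 2 * 0.3019755 * (0.8487 + 2 * 0.278291) := by norm_num
    _ ≤ 2 * centralMass 0.8487 * (0.8487 + 2 * stdNormalPDF 0.8487) := by gcongr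

lemma hasDerivAt_varianceGap {a : ℝ} (ha : 0 < a) :
    HasDerivAt varianceGap (stdNormalPDF a * (4 * stdNormalPDF a * (a + stdNormalPDF a) - 1)
      / (a + 2 * stdNormalPDF a) ^ 2) a := by
  have hφ := stdNormalPDF_pos a
  have hne : 2 * (a + 2 * stdNormalPDF a) ≠ 0 := by positivity
  have hne' : a + 2 * stdNormalPDF a ≠ 0 := by positivity
  have h := (hasDerivAt_centralMass a).sub ((hasDerivAt_id a).div
    (((hasDerivAt_id a).add ((hasDerivAt_stdNormalPDF a).const_mul 2)).const_mul 2) hne)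
  convert! h using 1
  simp only [id, Pi.add_apply]
  field_simp
  ring

lemma strictMonoOn_varianceGap : StrictMonoOn varianceGap (Icc 0.45 1) := by
  have hpos : ∀ x ∈ Icc (0.45 : ℝ) 1, 0 < x := fun x hx => lt_of_lt_of_le (by norm_num) hx.1
  refine strictMonoOn_of_hasDerivWithinAt_pos (convex_Icc _ _)
    (fun x hx => (hasDerivAt_varianceGap (hpos x hx)).continuousAt.continuousWithinAt)
    (fun x hx => (hasDerivAt_varianceGap (hpos x (interior_subset hx))).hasDerivWithinAt)
    fun x hx => ?_
  replace hx := interior_subset hx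
  have hx0 := hpos x hx
  obtain ⟨h1, h2⟩ := hx
  have hφ := stdNormalPDF_pos x
  have hE : 1.1 - 0.5 * x ≤ Real.exp (-x ^ 2 / 2) := by
    have hb := Real.exp_bound (x := -x ^ 2 / 2) (n := 4)
      (by rw [abs_le]; constructor <;> nlinarith) (by norm_num)
    have := (abs_le.1 hb).1
    have hx2 : |(-x ^ 2 / 2)| = x ^ 2 / 2 := by
      rw [neg_div, abs_neg, abs_of_nonneg (by positivity)]
    rw [hx2] at this
    simp only [Finset.sum_range_succ, Finset.sum_range_zero, Nat.factorial] at this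
    norm_num at this h1 ⊢
    have hx1 : 0 ≤ 1 - x := by linarith
    have hq : 0 ≤ (1 - x) * (x - 9 / 20) := mul_nonneg hx1 (by linarith)
    have h3 : x ^ 3 ≤ x ^ 2 := pow_le_pow_of_le_one hx0.le h2 (by norm_num)
    have h6 : x ^ 6 ≤ x ^ 4 := pow_le_pow_of_le_one hx0.le h2 (by norm_num)
    have h8 : x ^ 8 ≤ x ^ 4 := pow_le_pow_of_le_one hx0.le h2 (by norm_num)
    have h4 : 0 ≤ (1 - x) * (5 * x - (1 + x + x ^ 2 + x ^ 3)) := mul_nonneg hx1 (by linarith)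
    have h4' : 0 ≤ x ^ 4 := by positivity
    ring_nf at this h4 ⊢
    linarith
  have hφ1 : 0.398 * (1.1 - 0.5 * x) ≤ stdNormalPDF x := by
    unfold stdNormalPDF
    have := inv_sqrt_two_pi_bounds.1
    refine mul_le_mul (le_trans (by norm_num) this.le) hE ?_ (by positivity)
    norm_num
    linarith
  have hk : 0 < 4 * stdNormalPDF x * (x + stdNormalPDF x) - 1 := by
    have h3 : 0 ≤ 0.398 * (1.1 - 0.5 * x) := by
      norm_num
      linarith
    have h4 : 1 < 4 * (0.398 * (1.1 - 0.5 * x)) * (x + 0.398 * (1.1 - 0.5 * x)) := by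
      norm_num at h1 ⊢
      nlinarith [mul_nonneg (sub_nonneg.2 h1) (sub_nonneg.2 h2)]
    have h5 : 4 * (0.398 * (1.1 - 0.5 * x)) * (x + 0.398 * (1.1 - 0.5 * x))
        ≤ 4 * stdNormalPDF x * (x + stdNormalPDF x) := by gcongr
    linarith
  positivity

lemma exists_unique_root_varianceGap :
    ∃ a₀ ∈ Ioo (0.846 : ℝ) 0.8487, varianceGap a₀ = 0 ∧ ∀ a, 0 < a → varianceGap a = 0 → a = a₀ := by
  have hsub : Icc (0.846 : ℝ) 0.8487 ⊆ Icc 0.45 1 := Icc_subset_Icc (by norm_num) (by norm_num)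
  have hcont : ContinuousOn varianceGap (Icc 0.846 0.8487) := fun x hx =>
    (hasDerivAt_varianceGap (lt_of_lt_of_le (by norm_num) hx.1)).continuousAt.continuousWithinAt
  obtain ⟨a₀, ha₀, h₀⟩ := intermediate_value_Ioo (by norm_num) hcont
    ⟨varianceGap_lower.1, varianceGap_upper.1⟩
  refine ⟨a₀, ha₀, h₀, fun a ha h => ?_⟩
  rcases le_or_gt a 0.45 with h1 | h1
  · exact absurd h (varianceGap_neg_of_le ha h1).ne
  rcases le_or_gt 1 a with h2 | h2
  · exact absurd h (varianceGap_pos_of_one_le h2).ne'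
  exact strictMonoOn_varianceGap.injOn ⟨h1.le, h2.le⟩ (hsub (Ioo_subset_Icc_self ha₀))
    (h.trans h₀.symm)

lemma gaussianReal_real_eq_integral (s : Set ℝ) :
    (gaussianReal 0 1).real s = ∫ x in s, stdNormalPDF x := by
  rw [measureReal_def, gaussianReal_apply_eq_integral 0 one_ne_zero, gaussianPDFReal_zero_one,
    ENNReal.toReal_ofReal (integral_nonneg fun x => (stdNormalPDF_pos x).le)]

lemma setIntegral_gaussianReal (f : ℝ → ℝ) {s : Set ℝ} (hs : MeasurableSet s) :
    ∫ x in s, f x ∂(gaussianReal 0 1) = ∫ x in s, f x * stdNormalPDF x := by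
  rw [gaussianReal_of_var_ne_zero 0 one_ne_zero, setIntegral_withDensity_eq_setIntegral_toReal_smul
    (measurable_gaussianPDF 0 1) (Eventually.of_forall fun _ => gaussianPDF_lt_top) f hs]
  simp_rw [toReal_gaussianPDF, gaussianPDFReal_zero_one, smul_eq_mul, mul_comm]

lemma variance_cond_preimage {Ω : Type*} [MeasurableSpace Ω] {μ : Measure Ω}
    {V : Ω → ℝ} (hVmeas : Measurable V) (hV : μ.map V = gaussianReal 0 1) {s : Set ℝ}
    (hs : MeasurableSet s) (hpos : 0 < ∫ x in s, stdNormalPDF x) :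
    variance V (μ[|V ⁻¹' s]) = (∫ x in s, x ^ 2 * stdNormalPDF x) / (∫ x in s, stdNormalPDF x)
      - ((∫ x in s, x * stdNormalPDF x) / (∫ x in s, stdNormalPDF x)) ^ 2 := by
  have hmap : (μ[|V ⁻¹' s]).map V = (gaussianReal 0 1)[|s] := by
    rw [ProbabilityTheory.cond, ProbabilityTheory.cond, Measure.map_smul,
      ← Measure.restrict_map hVmeas hs, hV, ← hV, Measure.map_apply hVmeas hs]
  have hreal := gaussianReal_real_eq_integral s
  have hne : gaussianReal 0 1 s ≠ 0 := fun h => by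
    rw [measureReal_def, h, ENNReal.toReal_zero] at hreal
    linarith
  have : IsProbabilityMeasure ((gaussianReal 0 1)[|s]) := cond_isProbabilityMeasure hne
  have hint : ∀ f : ℝ → ℝ, ∫ x, f x ∂((gaussianReal 0 1)[|s])
      = (∫ x in s, f x * stdNormalPDF x) / (∫ x in s, stdNormalPDF x) := fun f => by
    rw [ProbabilityTheory.cond, integral_smul_measure, setIntegral_gaussianReal f hs,
      ENNReal.toReal_inv, ← measureReal_def, hreal, smul_eq_mul, div_eq_inv_mul]
  have hLp : MemLp id 2 ((gaussianReal 0 1)[|s]) :=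
    ((memLp_id_gaussianReal 2).restrict s).smul_measure (ENNReal.inv_ne_top.2 hne)
  rw [← variance_id_map hVmeas.aemeasurable, hmap, variance_eq_sub hLp, ← hint fun x => x ^ 2,
    ← hint fun x => x]
  rfl

lemma integrable_pow_mul_stdNormalPDF (n : ℕ) : Integrable fun x => x ^ n * stdNormalPDF x := by
  have h := (integrable_rpow_mul_exp_neg_mul_sq (b := 1 / 2) (by norm_num) (s := n)
    (by have : (0 : ℝ) ≤ n := n.cast_nonneg; linarith)).const_mul (√(2 * Real.pi))⁻¹
  refine h.congr (Eventually.of_forall fun x => ?_)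
  simp only [Real.rpow_natCast, stdNormalPDF]
  ring_nf

lemma hasDerivAt_mul_stdNormalPDF (x : ℝ) : HasDerivAt (fun x => x * stdNormalPDF x)
    (stdNormalPDF x - x ^ 2 * stdNormalPDF x) x := by
  convert! (hasDerivAt_id x).mul (hasDerivAt_stdNormalPDF x) using 1
  simp only [id]
  ring

lemma integral_Ioi_id_mul_stdNormalPDF (a : ℝ) :
    ∫ x in Ioi a, x * stdNormalPDF x = stdNormalPDF a := by
  have h := integral_Ioi_of_hasDerivAt_of_tendsto' (a := a)
    (fun x _ => hasDerivAt_stdNormalPDF x)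
    (by simpa using (integrable_pow_mul_stdNormalPDF 1).neg.integrableOn) tendsto_stdNormalPDF
  rw [integral_neg] at h
  linarith

lemma integral_Ioi_sq_mul_stdNormalPDF (a : ℝ) :
    ∫ x in Ioi a, x ^ 2 * stdNormalPDF x = a * stdNormalPDF a + (1 / 2 - centralMass a) := by
  have h0 := integrable_stdNormalPDF.integrableOn (s := Ioi a)
  have h2 := (integrable_pow_mul_stdNormalPDF 2).integrableOn (s := Ioi a)
  have h := integral_Ioi_of_hasDerivAt_of_tendsto' (a := a)
    (fun x _ => hasDerivAt_mul_stdNormalPDF x) (h0.sub h2) tendsto_mul_stdNormalPDF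
  rw [integral_sub h0 h2, integral_Ioi_stdNormalPDF] at h
  linarith

lemma integral_Iio_neg (f : ℝ → ℝ) (a : ℝ) : ∫ x in Iio (-a), f x = ∫ x in Ioi a, f (-x) := by
  rw [← integral_Iic_eq_integral_Iio, integral_comp_neg_Ioi]

lemma integral_Ioo_stdNormalPDF {a : ℝ} (ha : 0 < a) :
    ∫ x in Ioo (-a) a, stdNormalPDF x = 2 * centralMass a := by
  rw [← integral_Ioc_eq_integral_Ioo, ← intervalIntegral.integral_of_le (by linarith),
    ← intervalIntegral.integral_interval_sub_left
      (a := 0) (continuous_stdNormalPDF.intervalIntegrable _ _)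
      (continuous_stdNormalPDF.intervalIntegrable _ _)]
  change centralMass a - centralMass (-a) = _
  rw [centralMass_neg]
  ring

lemma integral_Ioo_id_mul_stdNormalPDF {a : ℝ} (ha : 0 < a) :
    ∫ x in Ioo (-a) a, x * stdNormalPDF x = 0 := by
  rw [← integral_Ioc_eq_integral_Ioo, ← intervalIntegral.integral_of_le (by linarith)]
  have h := intervalIntegral.integral_eq_sub_of_hasDerivAt (a := -a) (b := a)
    (fun x _ => hasDerivAt_stdNormalPDF x)
    (Continuous.intervalIntegrable ((continuous_id.mul continuous_stdNormalPDF).neg) _ _)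
  rw [intervalIntegral.integral_neg, stdNormalPDF_neg] at h
  linarith

lemma integral_Ioo_sq_mul_stdNormalPDF {a : ℝ} (ha : 0 < a) :
    ∫ x in Ioo (-a) a, x ^ 2 * stdNormalPDF x = 2 * centralMass a - 2 * (a * stdNormalPDF a) := by
  have h0 := continuous_stdNormalPDF.intervalIntegrable (μ := volume) (-a) a
  have h2 : IntervalIntegrable (fun x => x ^ 2 * stdNormalPDF x) volume (-a) a :=
    ((continuous_pow 2).mul continuous_stdNormalPDF).intervalIntegrable _ _
  have h := intervalIntegral.integral_eq_sub_of_hasDerivAt (a := -a) (b := a)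
    (fun x _ => hasDerivAt_mul_stdNormalPDF x) (h0.sub h2)
  rw [intervalIntegral.integral_sub h0 h2, stdNormalPDF_neg,
    intervalIntegral.integral_of_le (by linarith), intervalIntegral.integral_of_le (by linarith),
    integral_Ioc_eq_integral_Ioo, integral_Ioc_eq_integral_Ioo, integral_Ioo_stdNormalPDF ha] at h
  linarith

lemma stdNormalCDF_eq (x : ℝ) : stdNormalCDF x = 1 / 2 + centralMass x := by
  rw [stdNormalCDF, cdf_eq_real, gaussianReal_real_eq_integral, integral_Iic_eq_integral_Iio,
    ← neg_neg x, integral_Iio_neg]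
  simp_rw [stdNormalPDF_neg]
  rw [integral_Ioi_stdNormalPDF, centralMass_neg (-x)]
  ring

lemma stdNormalQuantile_half_add (a : ℝ) : stdNormalQuantile (1 / 2 + centralMass a) = a := by
  have : {x : ℝ | 1 / 2 + centralMass a ≤ stdNormalCDF x} = Ici a := by
    ext x
    simp [stdNormalCDF_eq, strictMono_centralMass.le_iff_le]
  rw [stdNormalQuantile, this, csInf_Ici]

lemma exists_centralMass_eq {q : ℝ} (hq : q ∈ Ioo (0 : ℝ) (1 / 2)) :
    ∃ a, 0 < a ∧ q = 1 / 2 - centralMass a := by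
  obtain ⟨b, hb, hb0⟩ := ((tendsto_centralMass.eventually_const_lt
    (show 1 / 2 - q < 1 / 2 by linarith [hq.1])).and (eventually_gt_atTop 0)).exists
  obtain ⟨a, ha, h⟩ := intermediate_value_Ioo hb0.le continuous_centralMass.continuousOn
    (show 1 / 2 - q ∈ Ioo (centralMass 0) (centralMass b) from
      ⟨by rw [centralMass_zero]; linarith [hq.2], hb⟩)
  exact ⟨a, ha.1, by linarith⟩

section

variable {Ω : Type*} [MeasurableSpace Ω] {μ : Measure Ω} {V : Ω → ℝ}

lemma variance_cond_Ioi (hVmeas : Measurable V) (hV : μ.map V = gaussianReal 0 1) (a : ℝ) :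
    variance V (μ[|V ⁻¹' Ioi a])
      = (a * stdNormalPDF a + (1 / 2 - centralMass a)) / (1 / 2 - centralMass a)
        - (stdNormalPDF a / (1 / 2 - centralMass a)) ^ 2 := by
  have hpos : 0 < 1 / 2 - centralMass a := sub_pos.2 (centralMass_lt_half a)
  rw [variance_cond_preimage hVmeas hV measurableSet_Ioi
    (by rwa [integral_Ioi_stdNormalPDF]), integral_Ioi_stdNormalPDF,
    integral_Ioi_id_mul_stdNormalPDF, integral_Ioi_sq_mul_stdNormalPDF]

lemma variance_cond_Iio_neg (hVmeas : Measurable V) (hV : μ.map V = gaussianReal 0 1) (a : ℝ) :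
    variance V (μ[|V ⁻¹' Iio (-a)]) = variance V (μ[|V ⁻¹' Ioi a]) := by
  have hpos : 0 < ∫ x in Ioi a, stdNormalPDF x := by
    rw [integral_Ioi_stdNormalPDF]
    exact sub_pos.2 (centralMass_lt_half a)
  rw [variance_cond_preimage hVmeas hV measurableSet_Ioi hpos,
    variance_cond_preimage hVmeas hV measurableSet_Iio
      (by rw [integral_Iio_neg]; simpa only [stdNormalPDF_neg] using hpos)]
  simp only [integral_Iio_neg, stdNormalPDF_neg, neg_sq, neg_mul, integral_neg, neg_div]

lemma variance_cond_Ioo (hVmeas : Measurable V) (hV : μ.map V = gaussianReal 0 1) {a : ℝ}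
    (ha : 0 < a) : variance V (μ[|V ⁻¹' Ioo (-a) a])
      = (2 * centralMass a - 2 * (a * stdNormalPDF a)) / (2 * centralMass a) := by
  have hpos : 0 < centralMass a := by simpa [centralMass_zero] using strictMono_centralMass ha
  rw [variance_cond_preimage hVmeas hV measurableSet_Ioo
    (by rw [integral_Ioo_stdNormalPDF ha]; positivity), integral_Ioo_stdNormalPDF ha,
    integral_Ioo_id_mul_stdNormalPDF ha, integral_Ioo_sq_mul_stdNormalPDF ha]
  ring

lemma variance_cond_Ioi_eq_Ioo_iff (hVmeas : Measurable V) (hV : μ.map V = gaussianReal 0 1)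
    {a : ℝ} (ha : 0 < a) :
    variance V (μ[|V ⁻¹' Ioi a]) = variance V (μ[|V ⁻¹' Ioo (-a) a]) ↔ varianceGap a = 0 := by
  rw [variance_cond_Ioi hVmeas hV, variance_cond_Ioo hVmeas hV ha, varianceGap]
  have hA : 0 < centralMass a := by simpa [centralMass_zero] using strictMono_centralMass ha
  have hq : 0 < 1 / 2 - centralMass a := sub_pos.2 (centralMass_lt_half a)
  have hφ := stdNormalPDF_pos a
  generalize centralMass a = A at *
  generalize stdNormalPDF a = φ at *
  have key : (a * φ + (1 / 2 - A)) / (1 / 2 - A) - (φ / (1 / 2 - A)) ^ 2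
      - (2 * A - 2 * (a * φ)) / (2 * A)
      = -(φ * (a + 2 * φ) / (2 * A * (1 / 2 - A) ^ 2)) * (A - a / (2 * (a + 2 * φ))) := by
    have h1 : a + 2 * φ ≠ 0 := by positivity
    generalize hB : 1 / 2 - A = B at *
    field_simp
    linear_combination (-(2 * a * φ) * (2 * B + 1)) * hB
  have hne : -(φ * (a + 2 * φ) / (2 * A * (1 / 2 - A) ^ 2)) ≠ 0 :=
    neg_ne_zero.2 (by positivity)
  rw [← sub_eq_zero, key, mul_eq_zero, or_iff_right hne]

end

/-- There is a unique `q̃ ∈ (0, 1/2)` such that, for a standard normal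
random variable `V`, `Var[V | V < Φ⁻¹(q̃)] = Var[V | Φ⁻¹(q̃) < V < Φ⁻¹(1−q̃)]`; moreover,
for this `q̃` the two conditional variances also coincide with
`Var[V | V > Φ⁻¹(1−q̃)]`, and `0.198 < q̃ < 0.199`. -/
theorem exists_unique_q_tilde
    {Ω : Type*} [MeasureSpace Ω] [IsProbabilityMeasure (ℙ : Measure Ω)]
    (V : Ω → ℝ) (hVmeas : Measurable V)
    (hV : (ℙ : Measure Ω).map V = gaussianReal 0 1) :
    (∃! q : ℝ, q ∈ Set.Ioo (0 : ℝ) (1/2) ∧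
      variance V (ℙ[|V ⁻¹' Set.Iio (stdNormalQuantile q)])
        = variance V
            (ℙ[|V ⁻¹' Set.Ioo (stdNormalQuantile q) (stdNormalQuantile (1 - q))])) ∧
    (∀ q : ℝ, q ∈ Set.Ioo (0 : ℝ) (1/2) →
      variance V (ℙ[|V ⁻¹' Set.Iio (stdNormalQuantile q)])
        = variance V
            (ℙ[|V ⁻¹' Set.Ioo (stdNormalQuantile q) (stdNormalQuantile (1 - q))]) →
      (variance V (ℙ[|V ⁻¹' Set.Iio (stdNormalQuantile q)])
          = variance V (ℙ[|V ⁻¹' Set.Ioi (stdNormalQuantile (1 - q))])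
        ∧ 0.198 < q ∧ q < 0.199)) := by
  have hquant : ∀ a : ℝ, stdNormalQuantile (1 / 2 - centralMass a) = -a ∧
      stdNormalQuantile (1 - (1 / 2 - centralMass a)) = a := fun a => by
    constructor
    · rw [sub_eq_add_neg, ← centralMass_neg, stdNormalQuantile_half_add]
    · rw [show 1 - (1 / 2 - centralMass a) = 1 / 2 + centralMass a by ring,
        stdNormalQuantile_half_add]
  obtain ⟨a₀, ha₀, hroot, huniq⟩ := exists_unique_root_varianceGap
  have hpos : 0 < a₀ := lt_trans (by norm_num) ha₀.1
  have hA : 0 < centralMass a₀ := by simpa [centralMass_zero] using strictMono_centralMass hpos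
  have hsol : ∀ q : ℝ, q ∈ Set.Ioo (0 : ℝ) (1/2) →
      variance V (ℙ[|V ⁻¹' Set.Iio (stdNormalQuantile q)])
        = variance V
            (ℙ[|V ⁻¹' Set.Ioo (stdNormalQuantile q) (stdNormalQuantile (1 - q))]) →
      q = 1 / 2 - centralMass a₀ := by
    intro q hq h
    obtain ⟨a, ha, rfl⟩ := exists_centralMass_eq hq
    rw [(hquant a).1, (hquant a).2, variance_cond_Iio_neg hVmeas hV,
      variance_cond_Ioi_eq_Ioo_iff hVmeas hV ha] at h
    rw [huniq a ha h]
  refine ⟨⟨1 / 2 - centralMass a₀, ⟨⟨sub_pos.2 (centralMass_lt_half a₀), by linarith⟩, ?_⟩,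
    fun q hq => hsol q hq.1 hq.2⟩, fun q hq h => ?_⟩
  · rw [(hquant a₀).1, (hquant a₀).2, variance_cond_Iio_neg hVmeas hV,
      variance_cond_Ioi_eq_Ioo_iff hVmeas hV hpos]
    exact hroot
  · obtain rfl := hsol q hq h
    rw [(hquant a₀).1, (hquant a₀).2]
    refine ⟨variance_cond_Iio_neg hVmeas hV a₀, ?_, ?_⟩
    · have := (strictMono_centralMass ha₀.2).trans varianceGap_upper.2
      norm_num at this ⊢
      linarith
    · have := varianceGap_lower.2.trans (strictMono_centralMass ha₀.1)
      norm_num at this ⊢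
      linarith
end
end

section
/- Let (X₁, X₂) be bivariate normal with correlation ρ ∈ (−1, 1) and non-degenerate benchmark Y = α₁X₁ + α₂X₂. Define V := (Y − EY)/σ(Y), U := Cov(Y, X₂)·X₁ − Cov(Y, X₁)·X₂, and W := (U − EU)/σ(U). Then: (i) σ(U) > 0, so W is well defined; (ii) V and W are independent standard normal random variables; (iii) there exist γ₁, γ₂ ∈ [−π, π) such that almost surely X_j = μ_j + σ_j·(cos(γ_j)·V + sin(γ_j)·W) for j = 1, 2; and (iv) cos(γ_j) = Cov(Y, X_j)/(σ(Y)·σ_j) and ρ = cos(γ₁ − γ₂). -/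
open MeasureTheory ProbabilityTheory Filter Set

noncomputable section

/-- Every point of the unit circle is `(cos γ, sin γ)` for some `γ ∈ [-π, π)`. -/
lemma exists_mem_Ico_cos_eq_sin_eq {a b : ℝ} (h : a ^ 2 + b ^ 2 = 1) :
    ∃ γ ∈ Set.Ico (-Real.pi) Real.pi, Real.cos γ = a ∧ Real.sin γ = b := by
  let z : ℂ := ⟨a, b⟩
  have hz : ‖z‖ = 1 := by
    rw [Complex.norm_def, Complex.normSq_mk, ← sq, ← sq, h, Real.sqrt_one]
  have hz0 : z ≠ 0 := norm_ne_zero_iff.1 (by simp [hz])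
  have hcos : Real.cos z.arg = a := by rw [Complex.cos_arg hz0, hz, div_one]
  have hsin : Real.sin z.arg = b := by rw [Complex.sin_arg, hz, div_one]
  rcases (Complex.arg_le_pi z).lt_or_eq with hlt | heq
  · exact ⟨z.arg, ⟨(Complex.neg_pi_lt_arg z).le, hlt⟩, hcos, hsin⟩
  · refine ⟨-Real.pi, ⟨le_rfl, neg_lt_self Real.pi_pos⟩, ?_, ?_⟩
    · rw [← hcos, heq, Real.cos_neg]
    · rw [← hsin, heq, Real.sin_neg, Real.sin_pi, neg_zero]

/-- Two real random variables are jointly Gaussian as soon as all their linear combinations are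
Gaussian. -/
lemma hasGaussianLaw_prodMk_of_forall_map_eq_gaussianReal
    {Ω : Type*} [MeasurableSpace Ω] {P : Measure Ω} {X Y : Ω → ℝ}
    (hX : AEMeasurable X P) (hY : AEMeasurable Y P)
    (h : ∀ a b : ℝ, ∃ m v, P.map (fun ω => a * X ω + b * Y ω) = gaussianReal m v) :
    HasGaussianLaw (fun ω => (X ω, Y ω)) P where
  isGaussian_map := by
    refine isGaussian_of_map_eq_gaussianReal fun L => ?_
    obtain ⟨m, v, hmv⟩ := h (L (1, 0)) (L (0, 1))
    refine ⟨m, v, ?_⟩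
    rw [AEMeasurable.map_map_of_aemeasurable (by fun_prop) (by fun_prop), ← hmv]
    congr 1
    ext ω
    have hpair : (X ω, Y ω) = X ω • ((1, 0) : ℝ × ℝ) + Y ω • ((0, 1) : ℝ × ℝ) := by simp
    rw [Function.comp_apply, hpair, map_add, map_smul, map_smul, smul_eq_mul, smul_eq_mul,
      mul_comm, mul_comm (Y ω)]

/-- The covariance of two linear combinations of two square-integrable random variables. -/
lemma covariance_linear_combination
    {Ω : Type*} [MeasurableSpace Ω] {P : Measure Ω} [IsFiniteMeasure P] {X Y : Ω → ℝ}
    (hX : MemLp X 2 P) (hY : MemLp Y 2 P) (a b c d : ℝ) :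
    cov[fun ω => a * X ω + b * Y ω, fun ω => c * X ω + d * Y ω; P]
      = a * c * Var[X; P] + (a * d + b * c) * cov[X, Y; P] + b * d * Var[Y; P] := by
  rw [← covariance_self hX.aemeasurable, ← covariance_self hY.aemeasurable]
  change cov[a • X + b • Y, c • X + d • Y; P] = _
  rw [covariance_add_left (hX.const_smul a) (hY.const_smul b)
      ((hX.const_smul c).add (hY.const_smul d)),
    covariance_add_right (hX.const_smul a) (hX.const_smul c) (hY.const_smul d),
    covariance_add_right (hY.const_smul b) (hX.const_smul c) (hY.const_smul d)]
  simp only [covariance_smul_left, covariance_smul_right, covariance_comm Y X]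
  ring

/-- The standardization of a non-degenerate Gaussian random variable is standard normal. -/
lemma map_standardize_eq_gaussianReal
    {Ω : Type*} [MeasurableSpace Ω] {P : Measure Ω} {X : Ω → ℝ}
    (hX : HasGaussianLaw X P) (hpos : 0 < Var[X; P]) :
    P.map (fun ω => (X ω - ∫ x, X x ∂P) / Real.sqrt (Var[X; P])) = gaussianReal 0 1 := by
  have hlaw : HasLaw X (gaussianReal P[X] Var[X; P].toNNReal) P :=
    ⟨hX.aemeasurable, hX.map_eq_gaussianReal⟩
  rw [(gaussianReal_div_const (gaussianReal_sub_const hlaw _) _).map_eq]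
  congr 1
  · simp
  · ext
    simp [Real.sq_sqrt hpos.le, hpos.le, hpos.ne']

/-- For a bivariate normal `(X₁, X₂)` with correlation `ρ ∈ (−1,1)` and
non-degenerate benchmark `Y = α₁X₁ + α₂X₂`, setting `V = (Y − EY)/σ(Y)`,
`U = Cov(Y,X₂)·X₁ − Cov(Y,X₁)·X₂` and `W = (U − EU)/σ(U)`: (i) `σ(U) > 0`;
(ii) `V, W` are independent standard normals; (iii) there are `γ₁, γ₂ ∈ [−π, π)` with
`X_j = μ_j + σ_j(cos γ_j · V + sin γ_j · W)` a.s.; and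
(iv) `cos γ_j = Cov(Y, X_j)/(σ(Y)σ_j)` and `ρ = cos(γ₁ − γ₂)`. -/
theorem bivariate_normal_angle_decomposition
    {Ω : Type*} [MeasureSpace Ω] [IsProbabilityMeasure (ℙ : Measure Ω)]
    (X₁ X₂ : Ω → ℝ) (hX₁ : Measurable X₁) (hX₂ : Measurable X₂)
    (μ₁ μ₂ σ₁ σ₂ r ρ : ℝ) (hσ₁ : 0 < σ₁) (hσ₂ : 0 < σ₂)
    (hρ : ρ = r / (σ₁ * σ₂)) (hρmem : ρ ∈ Set.Ioo (-1 : ℝ) 1)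
    (hGauss : ∀ c₁ c₂ : ℝ,
      (ℙ : Measure Ω).map (fun ω => c₁ * X₁ ω + c₂ * X₂ ω)
        = gaussianReal (c₁ * μ₁ + c₂ * μ₂)
            (Real.toNNReal (c₁ ^ 2 * σ₁ ^ 2 + 2 * c₁ * c₂ * r + c₂ ^ 2 * σ₂ ^ 2)))
    (α₁ α₂ : ℝ) (hα : (α₁, α₂) ≠ (0, 0))
    (Y : Ω → ℝ) (hY : Y = fun ω => α₁ * X₁ ω + α₂ * X₂ ω)
    (hVarYpos : 0 < variance Y ℙ)
    (U V W : Ω → ℝ)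
    (hU : U = fun ω => covar ℙ Y X₂ * X₁ ω - covar ℙ Y X₁ * X₂ ω)
    (hV : V = fun ω => (Y ω - ∫ x, Y x ∂ℙ) / Real.sqrt (variance Y ℙ))
    (hW : W = fun ω => (U ω - ∫ x, U x ∂ℙ) / Real.sqrt (variance U ℙ)) :
    0 < Real.sqrt (variance U ℙ)
    ∧ IndepFun V W ℙ
    ∧ (ℙ : Measure Ω).map V = gaussianReal 0 1
    ∧ (ℙ : Measure Ω).map W = gaussianReal 0 1
    ∧ ∃ γ₁ γ₂ : ℝ, γ₁ ∈ Set.Ico (-Real.pi) Real.pi ∧ γ₂ ∈ Set.Ico (-Real.pi) Real.pi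
      ∧ (∀ᵐ ω ∂(ℙ : Measure Ω),
          X₁ ω = μ₁ + σ₁ * (Real.cos γ₁ * V ω + Real.sin γ₁ * W ω)
          ∧ X₂ ω = μ₂ + σ₂ * (Real.cos γ₂ * V ω + Real.sin γ₂ * W ω))
      ∧ Real.cos γ₁ = covar ℙ Y X₁ / (Real.sqrt (variance Y ℙ) * σ₁)
      ∧ Real.cos γ₂ = covar ℙ Y X₂ / (Real.sqrt (variance Y ℙ) * σ₂)
      ∧ ρ = Real.cos (γ₁ - γ₂) := by
  have hG : HasGaussianLaw (fun ω => (X₁ ω, X₂ ω)) ℙ :=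
    hasGaussianLaw_prodMk_of_forall_map_eq_gaussianReal hX₁.aemeasurable hX₂.aemeasurable
      fun a b => ⟨_, _, hGauss a b⟩
  have hL₁ : MemLp X₁ 2 ℙ := hG.fst.memLp (by simp)
  have hL₂ : MemLp X₂ 2 ℙ := hG.snd.memLp (by simp)
  have hσ : 0 < σ₁ * σ₂ := mul_pos hσ₁ hσ₂
  have hr : r = ρ * (σ₁ * σ₂) := by rw [hρ]; field_simp
  have hD : 0 < σ₁ ^ 2 * σ₂ ^ 2 - r ^ 2 := by
    have : 0 < (1 - ρ) * (1 + ρ) * (σ₁ * σ₂) ^ 2 := by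
      have h₁ := hρmem.1
      have h₂ := hρmem.2
      have : 0 < 1 - ρ := by linarith
      have : 0 < 1 + ρ := by linarith
      positivity
    rw [hr]
    linarith
  have hlaw (a b : ℝ) : HasLaw (fun ω => a * X₁ ω + b * X₂ ω)
      (gaussianReal (a * μ₁ + b * μ₂)
        (Real.toNNReal (a ^ 2 * σ₁ ^ 2 + 2 * a * b * r + b ^ 2 * σ₂ ^ 2))) ℙ :=
    ⟨by fun_prop, hGauss a b⟩
  have hE (a b : ℝ) : ∫ ω, a * X₁ ω + b * X₂ ω = a * μ₁ + b * μ₂ := by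
    rw [(hlaw a b).integral_eq, integral_id_gaussianReal]
  have hvar (a b : ℝ) : Var[fun ω => a * X₁ ω + b * X₂ ω]
      = a ^ 2 * σ₁ ^ 2 + 2 * a * b * r + b ^ 2 * σ₂ ^ 2 := by
    rw [(hlaw a b).variance_eq, variance_id_gaussianReal, Real.coe_toNNReal]
    have h : 0 ≤ (a * σ₁ ^ 2 + b * r) ^ 2 + b ^ 2 * (σ₁ ^ 2 * σ₂ ^ 2 - r ^ 2) := by positivity
    refine nonneg_of_mul_nonneg_right (a := σ₁ ^ 2) ?_ (by positivity)
    linarith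
  have hvar₁ : Var[X₁] = σ₁ ^ 2 := by simpa using hvar 1 0
  have hvar₂ : Var[X₂] = σ₂ ^ 2 := by simpa using hvar 0 1
  have hcov₁₂ : cov[X₁, X₂] = r := by
    have h := hvar 1 1
    simp only [one_mul] at h
    rw [variance_fun_add hL₁ hL₂, hvar₁, hvar₂] at h
    linarith
  have hcov (a b c d : ℝ) : cov[fun ω => a * X₁ ω + b * X₂ ω, fun ω => c * X₁ ω + d * X₂ ω]
      = a * c * σ₁ ^ 2 + (a * d + b * c) * r + b * d * σ₂ ^ 2 := by
    rw [covariance_linear_combination hL₁ hL₂, hvar₁, hvar₂, hcov₁₂]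
  obtain ⟨c₁, hc₁⟩ : ∃ c₁, c₁ = α₁ * σ₁ ^ 2 + α₂ * r := ⟨_, rfl⟩
  obtain ⟨c₂, hc₂⟩ : ∃ c₂, c₂ = α₁ * r + α₂ * σ₂ ^ 2 := ⟨_, rfl⟩
  have hcY₁ : covar ℙ Y X₁ = c₁ := by
    have h : covar ℙ Y X₁ = cov[Y, X₁] := rfl
    have h' := hcov α₁ α₂ 1 0
    simp only [one_mul, zero_mul, add_zero, mul_one, mul_zero, zero_add] at h'
    rw [h, hY, h', hc₁]
  have hcY₂ : covar ℙ Y X₂ = c₂ := by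
    have h : covar ℙ Y X₂ = cov[Y, X₂] := rfl
    have h' := hcov α₁ α₂ 0 1
    simp only [one_mul, zero_mul, add_zero, mul_one, mul_zero, zero_add] at h'
    rw [h, hY, h', hc₂]
  have hU' : U = fun ω => c₂ * X₁ ω + -c₁ * X₂ ω := by
    rw [hU, hcY₁, hcY₂]
    ext ω
    ring
  obtain ⟨s, hs⟩ : ∃ s, s = Real.sqrt (Var[Y]) := ⟨_, rfl⟩
  obtain ⟨u, hu⟩ : ∃ u, u = Real.sqrt (Var[U]) := ⟨_, rfl⟩
  have hspos : 0 < s := hs ▸ Real.sqrt_pos.2 hVarYpos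
  have hs2 : s ^ 2 = α₁ ^ 2 * σ₁ ^ 2 + 2 * α₁ * α₂ * r + α₂ ^ 2 * σ₂ ^ 2 := by
    rw [hs, Real.sq_sqrt hVarYpos.le, hY, hvar]
  have hVarU : Var[U] = s ^ 2 * (σ₁ ^ 2 * σ₂ ^ 2 - r ^ 2) := by
    rw [hU', hvar, hs2, hc₁, hc₂]
    ring
  have hVarUpos : 0 < Var[U] := hVarU ▸ by positivity
  have hupos : 0 < u := hu ▸ Real.sqrt_pos.2 hVarUpos
  have hu2 : u ^ 2 = s ^ 2 * (σ₁ ^ 2 * σ₂ ^ 2 - r ^ 2) := by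
    rw [hu, Real.sq_sqrt hVarUpos.le, hVarU]
  have hYU : HasGaussianLaw (fun ω => (Y ω, U ω)) ℙ := by
    refine hasGaussianLaw_prodMk_of_forall_map_eq_gaussianReal
      (by rw [hY]; fun_prop) (by rw [hU']; fun_prop) fun a b =>
        ⟨_, _, (congrArg (Measure.map · ℙ) ?_).trans
          (hGauss (a * α₁ + b * c₂) (a * α₂ - b * c₁))⟩
    ext ω
    simp only [hY, hU']
    ring
  have hindep : IndepFun Y U ℙ := by
    refine hYU.indepFun_of_covariance_eq_zero ?_
    rw [hY, hU', hcov, hc₁, hc₂]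
    ring
  obtain ⟨γ₁, hγ₁, hcos₁, hsin₁⟩ :=
    exists_mem_Ico_cos_eq_sin_eq (a := c₁ / (s * σ₁)) (b := α₂ * u / (s ^ 2 * σ₁)) (by
      rw [div_pow, div_pow, mul_pow α₂, hu2]
      field_simp
      rw [hs2, hc₁]
      ring)
  obtain ⟨γ₂, hγ₂, hcos₂, hsin₂⟩ :=
    exists_mem_Ico_cos_eq_sin_eq (a := c₂ / (s * σ₂)) (b := -α₁ * u / (s ^ 2 * σ₂)) (by
      rw [div_pow, div_pow, mul_pow (-α₁), hu2]
      field_simp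
      rw [hs2, hc₂]
      ring)
  have hVω (ω : Ω) : s * V ω = α₁ * (X₁ ω - μ₁) + α₂ * (X₂ ω - μ₂) := by
    simp only [hV, ← hs]
    rw [mul_div_cancel₀ _ hspos.ne', hY, hE]
    ring
  have hWω (ω : Ω) : u * W ω = c₂ * (X₁ ω - μ₁) - c₁ * (X₂ ω - μ₂) := by
    simp only [hW, ← hu]
    rw [mul_div_cancel₀ _ hupos.ne', hU', hE]
    ring
  refine ⟨hu ▸ hupos, ?_, ?_, ?_, γ₁, γ₂, hγ₁, hγ₂, ae_of_all _ fun ω => ⟨?_, ?_⟩, ?_, ?_, ?_⟩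
  · rw [hV, hW]
    exact hindep.comp (φ := fun y => (y - ∫ x, Y x) / Real.sqrt (Var[Y]))
      (ψ := fun y => (y - ∫ x, U x) / Real.sqrt (Var[U])) (by fun_prop) (by fun_prop)
  · rw [hV]
    exact map_standardize_eq_gaussianReal hYU.fst hVarYpos
  · rw [hW]
    exact map_standardize_eq_gaussianReal hYU.snd hVarUpos
  · have h : s ^ 2 * (X₁ ω - μ₁) = c₁ * (s * V ω) + α₂ * (u * W ω) := by
      rw [hVω, hWω, hs2, hc₁, hc₂]
      ring
    rw [hcos₁, hsin₁]
    field_simp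
    linear_combination h
  · have h : s ^ 2 * (X₂ ω - μ₂) = c₂ * (s * V ω) - α₁ * (u * W ω) := by
      rw [hVω, hWω, hs2, hc₁, hc₂]
      ring
    rw [hcos₂, hsin₂]
    field_simp
    linear_combination h
  · rw [hcos₁, hcY₁, hs]
  · rw [hcos₂, hcY₂, hs]
  · have h : c₁ * c₂ - α₁ * α₂ * (σ₁ ^ 2 * σ₂ ^ 2 - r ^ 2) = r * s ^ 2 := by
      rw [hs2, hc₁, hc₂]
      ring
    rw [Real.cos_sub, hcos₁, hcos₂, hsin₁, hsin₂, hρ]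
    field_simp
    rw [hu2]
    linear_combination (-s ^ 2) * h
end
end
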